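/- For every simplicial complex X on a finite vertex set V (admitting at least one independent set A whose neighbor set is a minimal vertex cover, equivalently admitting a free face), v(X) = λ(X), where λ(X) is the minimum cardinality of a free face of X. -/

import Mathlib

open scoped Classical

/-- `F` is a facet (inclusion-maximal face) of the complex `X`. -/
def IsFacet {V : Type*} (X : Set (Finset V)) (F : Finset V) : Prop :=
  F ∈ X ∧ ∀ G ∈ X, F ⊆ G → G = F

/-- `A` is a free face of `X`: a face contained in exactly one facet. -/
def IsFreeFace {V : Type*} (X : Set (Finset V)) (A : Finset V) : Prop :=
  A ∈ X ∧ ∃! F : Finset V, IsFacet X F ∧ A ⊆ F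

/-- The neighbors of a face `A` in the clutter of circuits of `X`. -/
noncomputable def nbrs {V : Type*} [Fintype V] [DecidableEq V]
    (X : Set (Finset V)) (A : Finset V) : Finset V :=
  Finset.univ.filter (fun w => w ∉ A ∧ insert w A ∉ X)

/-- `W` is a vertex cover: its complement is a face of `X`. -/
def IsVertexCover {V : Type*} [Fintype V] [DecidableEq V]
    (X : Set (Finset V)) (W : Finset V) : Prop :=
  Finset.univ \ W ∈ X

/-- `W` is a minimal vertex cover. -/
def IsMinVertexCover {V : Type*} [Fintype V] [DecidableEq V]
    (X : Set (Finset V)) (W : Finset V) : Prop :=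
  IsVertexCover X W ∧ ∀ W' ⊂ W, ¬ IsVertexCover X W'

/-- The v-number of a simplicial complex `X`. -/
noncomputable def vNumber {V : Type*} [Fintype V] [DecidableEq V]
    (X : Set (Finset V)) : ℕ :=
  sInf {n : ℕ | ∃ A ∈ X, IsMinVertexCover X (nbrs X A) ∧ A.card = n}

/-- `λ(X)`: the minimum cardinality of a free face of `X`. -/
noncomputable def lambdaNumber {V : Type*} (X : Set (Finset V)) : ℕ :=
  sInf {n : ℕ | ∃ A : Finset V, IsFreeFace X A ∧ A.card = n}

/-! The complement of `nbrs X A` is the union of the facets containing `A`. Complementation turns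
minimal vertex covers into facets, so `nbrs X A` is a minimal vertex cover exactly when this union
is itself a facet; as facets form an antichain, this happens exactly when only one facet
contains `A`. -/

section Facets

variable {V : Type*} {X : Set (Finset V)} {A F : Finset V}

theorem isFacet_iff_maximal : IsFacet X F ↔ Maximal (· ∈ X) F := by
  simp only [IsFacet, maximal_iff, eq_comm]

theorem exists_isFacet_superset (hX : X.Finite) (hA : A ∈ X) : ∃ F, IsFacet X F ∧ A ⊆ F := by
  obtain ⟨F, hAF, hF⟩ := hX.exists_le_maximal hA
  exact ⟨F, isFacet_iff_maximal.2 hF, hAF⟩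

end Facets

section VertexCovers

variable {V : Type*} [Fintype V] [DecidableEq V] {X : Set (Finset V)} {A W : Finset V}

theorem isVertexCover_iff_compl_mem : IsVertexCover X W ↔ Wᶜ ∈ X := by
  rw [IsVertexCover, Finset.compl_eq_univ_sdiff]

theorem isMinVertexCover_iff_minimal : IsMinVertexCover X W ↔ Minimal (IsVertexCover X) W :=
  minimal_iff_forall_lt.symm

theorem isMinVertexCover_iff_isFacet_compl : IsMinVertexCover X W ↔ IsFacet X Wᶜ := by
  rw [isMinVertexCover_iff_minimal, isFacet_iff_maximal]
  refine and_congr isVertexCover_iff_compl_mem ?_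
  rw [compl_surjective.forall]
  refine forall_congr' fun G => ?_
  rw [isVertexCover_iff_compl_mem, compl_compl, compl_le_iff_compl_le, le_compl_comm]

theorem mem_compl_nbrs_iff_insert_mem (hA : A ∈ X) {w : V} :
    w ∈ (nbrs X A)ᶜ ↔ insert w A ∈ X := by
  by_cases hw : w ∈ A <;> simp [nbrs, hw, hA]

theorem mem_compl_nbrs_iff_exists_isFacet (hX : IsLowerSet X) (hA : A ∈ X) {w : V} :
    w ∈ (nbrs X A)ᶜ ↔ ∃ F, IsFacet X F ∧ A ⊆ F ∧ w ∈ F := by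
  rw [mem_compl_nbrs_iff_insert_mem hA]
  constructor
  · intro hwA
    obtain ⟨F, hF, hwAF⟩ := exists_isFacet_superset X.toFinite hwA
    obtain ⟨hwF, hAF⟩ := Finset.insert_subset_iff.1 hwAF
    exact ⟨F, hF, hAF, hwF⟩
  · rintro ⟨F, hF, hAF, hwF⟩
    exact hX (Finset.insert_subset hwF hAF) hF.1

theorem isFacet_compl_nbrs_iff_isFreeFace (hX : IsLowerSet X) (hA : A ∈ X) :
    IsFacet X (nbrs X A)ᶜ ↔ IsFreeFace X A := by
  have facet_subset {F : Finset V} (hF : IsFacet X F) (hAF : A ⊆ F) : F ⊆ (nbrs X A)ᶜ :=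
    fun _ hw => (mem_compl_nbrs_iff_exists_isFacet hX hA).2 ⟨F, hF, hAF, hw⟩
  constructor
  · intro hfacet
    obtain ⟨F, hF, hAF⟩ := exists_isFacet_superset X.toFinite hA
    refine ⟨hA, _, ⟨hfacet, hAF.trans (facet_subset hF hAF)⟩, ?_⟩
    rintro G ⟨hG, hAG⟩
    exact (hG.2 _ hfacet.1 (facet_subset hG hAG)).symm
  · rintro ⟨-, F, ⟨hF, hAF⟩, huniq⟩
    have compl_nbrs_subset : (nbrs X A)ᶜ ⊆ F := by
      intro w hw
      obtain ⟨G, hG, hAG, hwG⟩ := (mem_compl_nbrs_iff_exists_isFacet hX hA).1 hw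
      exact huniq G ⟨hG, hAG⟩ ▸ hwG
    rwa [compl_nbrs_subset.antisymm (facet_subset hF hAF)]

theorem isMinVertexCover_nbrs_iff_isFreeFace (hX : IsLowerSet X) (hA : A ∈ X) :
    IsMinVertexCover X (nbrs X A) ↔ IsFreeFace X A :=
  isMinVertexCover_iff_isFacet_compl.trans (isFacet_compl_nbrs_iff_isFreeFace hX hA)

end VertexCovers

/-- For every simplicial complex `X` on a finite vertex set `V`
admitting at least one face whose neighbor set is a minimal vertex cover
(equivalently, admitting a free face), `v(X) = λ(X)`. -/
theorem vNumber_eq_lambda {V : Type*} [Fintype V] [DecidableEq V]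
    (X : Set (Finset V))
    (hdown : ∀ s ∈ X, ∀ t ⊆ s, t ∈ X)
    (hvert : ∀ x : V, ({x} : Finset V) ∈ X)
    (hex : ∃ A ∈ X, IsMinVertexCover X (nbrs X A)) :
    vNumber X = lambdaNumber X := by
  have hX : IsLowerSet X := fun s t hts hs => hdown s hs t hts
  have mem_and_isMinVertexCover_iff (A : Finset V) :
      (A ∈ X ∧ IsMinVertexCover X (nbrs X A)) ↔ IsFreeFace X A :=
    ⟨fun ⟨hA, hcover⟩ => (isMinVertexCover_nbrs_iff_isFreeFace hX hA).1 hcover,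
      fun hfree => ⟨hfree.1, (isMinVertexCover_nbrs_iff_isFreeFace hX hfree.1).2 hfree⟩⟩
  simp only [vNumber, lambdaNumber, ← and_assoc, mem_and_isMinVertexCover_iff]
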